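/- arXiv:0805.4353 — 9 statements merged into one kernel-verified Lean document; each statement's English description precedes it below -/
import Mathlib

section
/- Let μ and ν be probability measures on ℝ with μ((0,∞)) = 1 and ν([0,∞)) = 1, and write F̄(x) := μ((x,∞)) and Ḡ(x) := ν((x,∞)). Assume that μ is subexponential and that there exists a constant c > 0 such that Ḡ(x)/F̄(x) → c as x → ∞. Then (μ∗ν)((x,∞)) / (F̄(x) + Ḡ(x)) → 1 as x → ∞, where μ∗ν is the convolution of μ and ν. -/
open MeasureTheory Filter Set

/-!
Write `F`, `G` for the tails of `μ`, `ν`, and let `X ∼ μ`, `Y ∼ ν` be independent. It suffices to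
show `P(X + Y > x) / F x → 1 + c`.

*Lower bound.* Since `X, Y ≥ 0`, `P(X + Y > x) ≥ P(X > x or Y > x) = F x + G x - F x * G x`.

*Upper bound.* For every level `K`, the event `X + Y > x` forces `X > x - K`, or `Y > x - K`, or
that both variables exceed `K` (`conv_tail_le`). A subexponential tail is long-tailed,
`F (x - K) / F x → 1` (`tendsto_shift_div`), so the first two events contribute `1 + c` in the
limit. For the third one, `G ≤ (c + 1) F` beyond a large `K`, so by Fubini its probability is at
most `c + 1` times the same probability for two independent copies of `X` (`bothLarge_le`). The
latter is at most `P(X + X' > x) - 2 * F x * (1 - F K)` (`bothLarge_add_le`), which after division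
by `F x` tends to `2 * F K`; this is arbitrarily small as `K → ∞`.
-/

/-- A probability measure `μ` on `ℝ` (concentrated on `(0,∞)`) is subexponential if its
tail is positive and the tail of `μ ∗ μ` is asymptotic to twice the tail of `μ`. -/
def Subexponential (μ : Measure ℝ) : Prop :=
  (∀ x > (0 : ℝ), 0 < μ (Ioi x)) ∧
    Tendsto (fun x : ℝ => ((μ.conv μ) (Ioi x)).toReal / (μ (Ioi x)).toReal)
      atTop (nhds 2)

/-- The event that both coordinates exceed `K` and their sum exceeds `x`. -/
def bothLarge (K x : ℝ) : Set (ℝ × ℝ) := {p | K < p.1 ∧ K < p.2 ∧ x < p.1 + p.2}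

lemma measurableSet_bothLarge (K x : ℝ) : MeasurableSet (bothLarge K x) := by
  unfold bothLarge
  exact (measurableSet_lt measurable_const measurable_fst).inter
    ((measurableSet_lt measurable_const measurable_snd).inter
      (measurableSet_lt measurable_const (measurable_fst.add measurable_snd)))

lemma conv_real_Ioi (μ ν : Measure ℝ) (x : ℝ) :
    (μ.conv ν).real (Ioi x) = (μ.prod ν).real {p : ℝ × ℝ | x < p.1 + p.2} := by
  unfold Measure.conv
  rw [map_measureReal_apply (by fun_prop) measurableSet_Ioi]
  rfl

section

variable (μ ν : Measure ℝ) [IsProbabilityMeasure μ] [IsProbabilityMeasure ν]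

lemma conv_tail_le (K x : ℝ) :
    (μ.conv ν).real (Ioi x) ≤
      μ.real (Ioi (x - K)) + ν.real (Ioi (x - K)) + (μ.prod ν).real (bothLarge K x) := by
  rw [conv_real_Ioi]
  have hsub : {p : ℝ × ℝ | x < p.1 + p.2} ⊆
      (Ioi (x - K) ×ˢ univ ∪ univ ×ˢ Ioi (x - K)) ∪ bothLarge K x := by
    rintro ⟨a, b⟩ h
    simp only [mem_ofPred_eq] at h
    simp only [bothLarge, mem_union, mem_prod, mem_Ioi, mem_univ, and_true, true_and, mem_ofPred_eq]
    by_cases h1 : x - K < a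
    · exact Or.inl (Or.inl h1)
    by_cases h2 : x - K < b
    · exact Or.inl (Or.inr h2)
    right
    refine ⟨?_, ?_, h⟩ <;> linarith
  calc _ ≤ (μ.prod ν).real ((Ioi (x - K) ×ˢ univ ∪ univ ×ˢ Ioi (x - K)) ∪ bothLarge K x) :=
        measureReal_mono hsub
    _ ≤ (μ.prod ν).real (Ioi (x - K) ×ˢ univ) + (μ.prod ν).real (univ ×ˢ Ioi (x - K))
          + (μ.prod ν).real (bothLarge K x) := by
        refine (measureReal_union_le _ _).trans ?_
        gcongr
        exact measureReal_union_le _ _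
    _ = _ := by simp [measureReal_prod_prod]

lemma le_conv_tail (hμ : μ (Ioi 0) = 1) (hν : ν (Ici 0) = 1) (x : ℝ) :
    μ.real (Ioi x) + ν.real (Ioi x) - μ.real (Ioi x) * ν.real (Ioi x) ≤
      (μ.conv ν).real (Ioi x) := by
  rw [conv_real_Ioi]
  have hμ' : ∀ᵐ a ∂μ, 0 < a := (prob_compl_eq_zero_iff measurableSet_Ioi).2 hμ
  have hν' : ∀ᵐ a ∂ν, 0 ≤ a := (prob_compl_eq_zero_iff measurableSet_Ici).2 hν
  have h1 : ∀ᵐ p ∂(μ.prod ν), 0 < p.1 := Measure.quasiMeasurePreserving_fst.ae hμ'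
  have h2 : ∀ᵐ p ∂(μ.prod ν), 0 ≤ p.2 := Measure.quasiMeasurePreserving_snd.ae hν'
  have hle : (μ.prod ν).real (Ioi x ×ˢ univ ∪ univ ×ˢ Ioi x) ≤
      (μ.prod ν).real {p : ℝ × ℝ | x < p.1 + p.2} := by
    refine ENNReal.toReal_mono (measure_ne_top _ _) (measure_mono_ae ?_)
    filter_upwards [h1, h2] with p hp1 hp2 hp
    have hp' : x < p.1 ∨ x < p.2 := by
      rcases hp with hp | hp
      · exact Or.inl hp.1
      · exact Or.inr hp.2
    change x < p.1 + p.2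
    rcases hp' with hp | hp <;> linarith
  refine le_trans (le_of_eq ?_) hle
  have h := measureReal_union_add_inter (μ := μ.prod ν) (s := Ioi x ×ˢ (univ : Set ℝ))
    (t := (univ : Set ℝ) ×ˢ Ioi x) (MeasurableSet.univ.prod measurableSet_Ioi)
  rw [prod_inter_prod, univ_inter, inter_univ, measureReal_prod_prod, measureReal_prod_prod,
    measureReal_prod_prod] at h
  simp only [probReal_univ, mul_one, one_mul] at h
  linarith

/-- A tail comparison beyond `K` transfers, section by section, to the event `bothLarge K x`. -/
lemma bothLarge_le (K x C : ℝ) (hC : 0 ≤ C)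
    (h : ∀ z, K ≤ z → ν.real (Ioi z) ≤ C * μ.real (Ioi z)) :
    (μ.prod ν).real (bothLarge K x) ≤ C * (μ.prod μ).real (bothLarge K x) := by
  have key : (μ.prod ν) (bothLarge K x) ≤ ENNReal.ofReal C * (μ.prod μ) (bothLarge K x) := by
    rw [Measure.prod_apply (measurableSet_bothLarge K x),
      Measure.prod_apply (measurableSet_bothLarge K x), ← lintegral_const_mul' _ _ (by simp)]
    refine lintegral_mono fun a => ?_
    by_cases ha : K < a
    · have hs : Prod.mk a ⁻¹' bothLarge K x = Ioi (max K (x - a)) := by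
        ext b
        simp only [bothLarge, mem_preimage, mem_ofPred_eq, mem_Ioi, max_lt_iff, sub_lt_iff_lt_add']
        tauto
      simp only [hs]
      rw [← ofReal_measureReal (μ := ν), ← ofReal_measureReal (μ := μ), ← ENNReal.ofReal_mul hC]
      exact ENNReal.ofReal_le_ofReal (h _ (le_max_left _ _))
    · have hs : Prod.mk a ⁻¹' bothLarge K x = ∅ := by
        ext b
        simp [bothLarge, ha]
      simp [hs]
  have := ENNReal.toReal_mono (ENNReal.mul_ne_top (by simp) (measure_ne_top _ _)) key
  rwa [ENNReal.toReal_mul, ENNReal.toReal_ofReal hC] at this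

lemma real_Ioc_eq {a b : ℝ} (hab : a ≤ b) :
    μ.real (Ioc a b) = μ.real (Ioi a) - μ.real (Ioi b) := by
  have h := measureReal_union (μ := μ) (s₁ := Ioc a b) (s₂ := Ioi b)
    (disjoint_left.2 fun y hy hy' => not_lt.2 hy.2 hy') measurableSet_Ioi
  rw [Ioc_union_Ioi_eq_Ioi hab] at h
  linarith

lemma bothLarge_add_le (hμ : μ (Ioi 0) = 1) {K x : ℝ} (hK : 0 ≤ K) (hx : K ≤ x) :
    (μ.prod μ).real (bothLarge K x) + 2 * (μ.real (Ioi x) * (1 - μ.real (Ioi K))) ≤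
      (μ.conv μ).real (Ioi x) := by
  have hμ1 : μ.real (Ioi 0) = 1 := by simp [measureReal_def, hμ]
  have hd1 : Disjoint (bothLarge K x) (Ioc 0 K ×ˢ Ioi x) :=
    disjoint_left.2 fun p hp hp' => not_lt.2 hp'.1.2 hp.1
  have hd2 : Disjoint (bothLarge K x ∪ Ioc 0 K ×ˢ Ioi x) (Ioi x ×ˢ Ioc 0 K) := by
    refine disjoint_left.2 fun p hp hp' => ?_
    rcases hp with hp | hp
    · exact not_lt.2 hp'.2.2 hp.2.1
    · exact not_lt.2 (hp.1.2.trans hx) hp'.1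
  rw [conv_real_Ioi]
  have hsub : (bothLarge K x ∪ Ioc 0 K ×ˢ Ioi x) ∪ Ioi x ×ˢ Ioc 0 K ⊆
      {p : ℝ × ℝ | x < p.1 + p.2} := by
    rintro ⟨a, b⟩ ((h | ⟨h, h'⟩) | ⟨h, h'⟩)
    · exact h.2.2
    · simp only [mem_Ioc, mem_Ioi, mem_ofPred_eq] at *
      linarith
    · simp only [mem_Ioc, mem_Ioi, mem_ofPred_eq] at *
      linarith
  refine le_trans (le_of_eq ?_) (measureReal_mono hsub)
  rw [measureReal_union hd2 (measurableSet_Ioi.prod measurableSet_Ioc),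
    measureReal_union hd1 (measurableSet_Ioc.prod measurableSet_Ioi),
    measureReal_prod_prod, measureReal_prod_prod, real_Ioc_eq μ hK, hμ1]
  ring

/-- The lower bound on the tail of `μ ∗ μ` that keeps track of the shifted tail at `x - t`,
obtained by splitting according to the first coordinate: `(0, t]`, `(t, x]` or `(x, ∞)`. -/
lemma shift_bound (hμ : μ (Ioi 0) = 1) {t x : ℝ} (ht : 0 ≤ t) (hx : t ≤ x) :
    μ.real (Ioi x) * (2 - μ.real (Ioi t)) +
        μ.real (Ioi (x - t)) * (μ.real (Ioi t) - μ.real (Ioi x)) ≤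
      (μ.conv μ).real (Ioi x) := by
  have hμ1 : μ.real (Ioi 0) = 1 := by simp [measureReal_def, hμ]
  have hd1 : Disjoint (Ioi x ×ˢ Ioi (0 : ℝ)) (Ioc 0 t ×ˢ Ioi x) :=
    disjoint_left.2 fun p hp hp' => not_lt.2 (hp'.1.2.trans hx) hp.1
  have hd2 : Disjoint (Ioi x ×ˢ Ioi (0 : ℝ) ∪ Ioc 0 t ×ˢ Ioi x) (Ioc t x ×ˢ Ioi (x - t)) := by
    refine disjoint_left.2 fun p hp hp' => ?_
    rcases hp with hp | hp
    · exact not_lt.2 hp'.1.2 hp.1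
    · exact not_lt.2 hp.1.2 hp'.1.1
  rw [conv_real_Ioi]
  have hsub : (Ioi x ×ˢ Ioi (0 : ℝ) ∪ Ioc 0 t ×ˢ Ioi x) ∪ Ioc t x ×ˢ Ioi (x - t) ⊆
      {p : ℝ × ℝ | x < p.1 + p.2} := by
    rintro ⟨a, b⟩ ((⟨h, h'⟩ | ⟨h, h'⟩) | ⟨h, h'⟩) <;>
    · simp only [mem_Ioc, mem_Ioi, mem_ofPred_eq] at *
      linarith
  refine le_trans (le_of_eq ?_) (measureReal_mono hsub)
  rw [measureReal_union hd2 (measurableSet_Ioc.prod measurableSet_Ioi),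
    measureReal_union hd1 (measurableSet_Ioc.prod measurableSet_Ioi),
    measureReal_prod_prod, measureReal_prod_prod, measureReal_prod_prod, real_Ioc_eq μ ht,
    real_Ioc_eq μ hx, hμ1]
  ring

lemma tendsto_tail : Tendsto (fun x => μ.real (Ioi x)) atTop (nhds 0) := by
  have h := (ProbabilityTheory.tendsto_cdf_atTop μ).const_sub 1
  rw [sub_self] at h
  refine h.congr fun x => ?_
  rw [ProbabilityTheory.cdf_eq_real, ← compl_Iic, probReal_compl_eq_one_sub measurableSet_Iic]

/-- Subexponential tails are long-tailed. -/
lemma tendsto_shift_div (hμ : μ (Ioi 0) = 1) (hpos : ∀ x > 0, 0 < μ.real (Ioi x))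
    (hlim : Tendsto (fun x => (μ.conv μ).real (Ioi x) / μ.real (Ioi x)) atTop (nhds 2))
    {t : ℝ} (ht : 0 < t) :
    Tendsto (fun x => μ.real (Ioi (x - t)) / μ.real (Ioi x)) atTop (nhds 1) := by
  have hFt := hpos t ht
  have hup : Tendsto (fun x => ((μ.conv μ).real (Ioi x) / μ.real (Ioi x) - (2 - μ.real (Ioi t))) /
      (μ.real (Ioi t) - μ.real (Ioi x))) atTop (nhds 1) := by
    have h := (hlim.sub_const (2 - μ.real (Ioi t))).div
      ((tendsto_tail μ).const_sub (μ.real (Ioi t))) (by simpa using hFt.ne')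
    rw [sub_zero, sub_sub_cancel, div_self hFt.ne'] at h
    exact h
  refine tendsto_of_tendsto_of_tendsto_of_le_of_le' tendsto_const_nhds hup ?_ ?_
  · filter_upwards [eventually_gt_atTop 0] with x hx
    rw [one_le_div (hpos x hx)]
    exact measureReal_mono (Ioi_subset_Ioi (by linarith))
  · filter_upwards [eventually_ge_atTop t, (tendsto_tail μ).eventually_lt_const hFt] with x hx hxt
    have hFx := hpos x (ht.trans_le hx)
    rw [le_div_iff₀ (by linarith), le_sub_iff_add_le, le_div_iff₀ hFx]
    have h := shift_bound μ hμ ht.le hx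
    refine le_trans (le_of_eq ?_) h
    field_simp
    ring

end

theorem stmt0 (μ ν : Measure ℝ) [IsProbabilityMeasure μ] [IsProbabilityMeasure ν]
    (hμ : μ (Ioi 0) = 1) (hν : ν (Ici 0) = 1)
    (hsub : Subexponential μ) (c : ℝ) (hc : 0 < c)
    (hG : Tendsto (fun x : ℝ => (ν (Ioi x)).toReal / (μ (Ioi x)).toReal)
      atTop (nhds c)) :
    Tendsto (fun x : ℝ =>
        ((μ.conv ν) (Ioi x)).toReal / ((μ (Ioi x)).toReal + (ν (Ioi x)).toReal))
      atTop (nhds 1) := by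
  obtain ⟨hpos0, hlim⟩ := hsub
  have hpos : ∀ x > 0, 0 < μ.real (Ioi x) := fun x hx =>
    ENNReal.toReal_pos (hpos0 x hx).ne' (measure_ne_top _ _)
  simp only [← measureReal_def] at hG hlim ⊢
  have hmain : Tendsto (fun x => (μ.conv ν).real (Ioi x) / μ.real (Ioi x)) atTop
      (nhds (1 + c)) := by
    refine tendsto_order.2 ⟨fun a ha => ?_, fun a ha => ?_⟩
    · have hlow : Tendsto (fun x => 1 + ν.real (Ioi x) / μ.real (Ioi x) - ν.real (Ioi x)) atTop
          (nhds (1 + c)) := by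
        simpa using (hG.const_add 1).sub (tendsto_tail ν)
      filter_upwards [hlow.eventually_const_lt ha, eventually_gt_atTop 0] with x hx hx0
      have hFx := hpos x hx0
      refine hx.trans_le ?_
      rw [le_div_iff₀ hFx]
      refine le_trans (le_of_eq ?_) (le_conv_tail μ ν hμ hν x)
      field_simp
    · -- Fix a level `K` at which the limiting error `2 * (c + 1) * F K` is below `a - (1 + c)`
      -- and beyond which `G ≤ (c + 1) * F`.
      have hK1 : ∀ᶠ K in atTop, 1 + c + (c + 1) * (2 - 2 * (1 - μ.real (Ioi K))) < a := by
        have h : Tendsto (fun K => 1 + c + (c + 1) * (2 - 2 * (1 - μ.real (Ioi K)))) atTop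
            (nhds (1 + c + (c + 1) * (2 - 2 * (1 - 0)))) :=
          ((((tendsto_tail μ).const_sub 1).const_mul 2).const_sub 2 |>.const_mul (c + 1)).const_add
            (1 + c)
        exact h.eventually_lt_const (by linarith)
      have hK2 : ∀ᶠ K in atTop, ∀ z, K ≤ z → ν.real (Ioi z) / μ.real (Ioi z) < c + 1 :=
        eventually_forall_ge_atTop.2 (hG.eventually_lt_const (lt_add_one c))
      obtain ⟨K, hKa, hKG, hK0⟩ := (hK1.and (hK2.and (eventually_gt_atTop 0))).exists
      have hKG' : ∀ z, K ≤ z → ν.real (Ioi z) ≤ (c + 1) * μ.real (Ioi z) := fun z hz =>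
        ((div_lt_iff₀ (hpos z (lt_of_lt_of_le hK0 hz))).1 (hKG z hz)).le
      have hshift := tendsto_shift_div μ hμ hpos hlim hK0
      have hshiftG : Tendsto (fun x => ν.real (Ioi (x - K)) / μ.real (Ioi (x - K)) *
          (μ.real (Ioi (x - K)) / μ.real (Ioi x))) atTop (nhds (c * 1)) :=
        (hG.comp (tendsto_atTop_add_const_right atTop (-K) tendsto_id)).mul hshift
      have hup := (hshift.add hshiftG).add
        ((hlim.sub_const (2 * (1 - μ.real (Ioi K)))).const_mul (c + 1))
      rw [mul_one] at hup
      filter_upwards [hup.eventually_lt_const hKa, eventually_gt_atTop K] with x hx hxK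
      have hFx := hpos x (hK0.trans hxK)
      have hFxK := hpos (x - K) (by linarith)
      refine lt_of_le_of_lt ?_ hx
      have h1 := conv_tail_le μ ν K x
      have h2 := bothLarge_le μ ν K x (c + 1) (by linarith) hKG'
      have h3 := mul_le_mul_of_nonneg_left (bothLarge_add_le μ hμ hK0.le hxK.le)
        (by linarith : 0 ≤ c + 1)
      rw [div_mul_div_cancel₀ hFxK.ne', div_le_iff₀ hFx]
      have h4 : (μ.real (Ioi (x - K)) / μ.real (Ioi x) + ν.real (Ioi (x - K)) / μ.real (Ioi x) +
          (c + 1) * ((μ.conv μ).real (Ioi x) / μ.real (Ioi x) - 2 * (1 - μ.real (Ioi K)))) *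
            μ.real (Ioi x) = μ.real (Ioi (x - K)) + ν.real (Ioi (x - K)) +
          (c + 1) * ((μ.conv μ).real (Ioi x) - 2 * (μ.real (Ioi x) * (1 - μ.real (Ioi K)))) := by
        field_simp
      rw [h4]
      linarith
  have hdiv := hmain.div (hG.const_add 1) (by linarith : 1 + c ≠ 0)
  rw [div_self (by linarith : 1 + c ≠ 0)] at hdiv
  refine hdiv.congr' ?_
  filter_upwards [eventually_gt_atTop 0] with x hx
  have hFx := hpos x hx
  simp only [Pi.div_apply]
  rw [one_add_div hFx.ne', div_div_div_cancel_right₀ hFx.ne']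
end

section
/- Let μ be a probability measure on ℝ with μ((0,∞)) = 1 and tail F̄(x) := μ((x,∞)). Suppose there exist α ≥ 0 and a measurable function H : (0,∞) → (0,∞) that is slowly varying (i.e., for every c > 0, H(cx)/H(x) → 1 as x → ∞) such that F̄(x) / (x^{-α} H(x)) → 1 as x → ∞. Then μ is subexponential. -/
/-!
Write `T x = μ (x, ∞)`. Regular variation of the tail gives `T (c x) / T x → c ^ (-α)` for every
`c > 0` (`tail_ratio`), and `T x → 0` since `μ` is a probability measure.

For independent `X`, `Y` with law `μ`, the event `X + Y > x` contains `{X > x} ∪ {Y > x}` up to a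
null set, so its probability is at least `2 T x - (T x) ^ 2` (`conv_lower`). For `0 < δ < 1` it is
contained in `{X > (1 - δ) x} ∪ {Y > (1 - δ) x} ∪ {X > δ x, Y > δ x}`, so its probability is at most
`2 T ((1 - δ) x) + (T (δ x)) ^ 2` (`conv_upper`). After division by `T x`, the lower bound tends to
`2` and the upper bound to `2 (1 - δ) ^ (-α)`, because `T (δ x) ^ 2 / T x → δ ^ (-α) * 0`. Letting
`δ → 0` gives the limit `2`.
-/

open MeasureTheory Filter Set

lemma conv_real_eq (μ : Measure ℝ) (x : ℝ) :
    (μ.conv μ).real (Ioi x) = (μ.prod μ).real {p : ℝ × ℝ | x < p.1 + p.2} := by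
  rw [Measure.conv, map_measureReal_apply (by fun_prop) measurableSet_Ioi]
  rfl

lemma conv_lower (μ : Measure ℝ) [IsProbabilityMeasure μ] (hμ : μ (Ioi 0) = 1)
    {x : ℝ} (hx : 0 ≤ x) :
    2 * μ.real (Ioi x) - μ.real (Ioi x) ^ 2 ≤ (μ.conv μ).real (Ioi x) := by
  rw [conv_real_eq]
  have h1 : μ.real (Ioi 0) = 1 := by simp [measureReal_def, hμ]
  have hinter : ((Ioi x ×ˢ Ioi 0) ∩ (Ioi 0 ×ˢ Ioi x) : Set (ℝ × ℝ)) = Ioi x ×ˢ Ioi x := by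
    rw [prod_inter_prod, Ioi_inter_Ioi, Ioi_inter_Ioi, max_eq_left hx, max_eq_right hx]
  have hunion := measureReal_union_add_inter (μ := μ.prod μ) (s := Ioi x ×ˢ Ioi (0 : ℝ))
    (t := Ioi (0 : ℝ) ×ˢ Ioi x) (measurableSet_Ioi.prod measurableSet_Ioi)
  rw [hinter, measureReal_prod_prod, measureReal_prod_prod, measureReal_prod_prod, h1] at hunion
  have hsub : (μ.prod μ).real ((Ioi x ×ˢ Ioi 0) ∪ (Ioi 0 ×ˢ Ioi x)) ≤
      (μ.prod μ).real {p : ℝ × ℝ | x < p.1 + p.2} := by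
    refine measureReal_mono ?_
    rintro ⟨a, b⟩ (⟨ha, hb⟩ | ⟨ha, hb⟩) <;>
    · simp only [mem_Ioi, mem_ofPred_eq] at *
      linarith
  nlinarith

lemma conv_upper (μ : Measure ℝ) [IsProbabilityMeasure μ] (x δ : ℝ) :
    (μ.conv μ).real (Ioi x) ≤
      2 * μ.real (Ioi ((1 - δ) * x)) + μ.real (Ioi (δ * x)) ^ 2 := by
  rw [conv_real_eq]
  have hsub : {p : ℝ × ℝ | x < p.1 + p.2} ⊆
      (Ioi ((1 - δ) * x) ×ˢ univ ∪ univ ×ˢ Ioi ((1 - δ) * x)) ∪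
        Ioi (δ * x) ×ˢ Ioi (δ * x) := by
    rintro ⟨a, b⟩ hab
    simp only [mem_ofPred_eq, mem_union, mem_prod, mem_Ioi, mem_univ, and_true, true_and] at *
    by_contra! h
    have := h.2 (by linarith [h.1.2])
    linarith [h.1.1]
  have h0 := measureReal_mono (μ := μ.prod μ) hsub
  have h2 := measureReal_union_le (μ := μ.prod μ)
    (Ioi ((1 - δ) * x) ×ˢ univ ∪ univ ×ˢ Ioi ((1 - δ) * x)) (Ioi (δ * x) ×ˢ Ioi (δ * x))
  have h3 := measureReal_union_le (μ := μ.prod μ)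
    (Ioi ((1 - δ) * x) ×ˢ (univ : Set ℝ)) ((univ : Set ℝ) ×ˢ Ioi ((1 - δ) * x))
  simp only [measureReal_prod_prod, probReal_univ] at h2 h3
  nlinarith

lemma tendsto_tail_zero (μ : Measure ℝ) [IsProbabilityMeasure μ] :
    Tendsto (fun x : ℝ => μ.real (Ioi x)) atTop (nhds 0) := by
  have h : Tendsto (fun x : ℝ => μ (Ioi x)) atTop (nhds (μ (⋂ x : ℝ, Ioi x))) :=
    tendsto_measure_iInter_atTop (fun _ => measurableSet_Ioi.nullMeasurableSet)
      (fun _ _ hab => Ioi_subset_Ioi hab) ⟨0, measure_ne_top _ _⟩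
  have he : (⋂ x : ℝ, Ioi x) = ∅ := by
    ext y
    simpa using ⟨y, le_rfl⟩
  rw [he, measure_empty] at h
  exact (ENNReal.tendsto_toReal ENNReal.zero_ne_top).comp h

/-- A function asymptotic to `x ^ (-α) * H x`, with `H` slowly varying, is regularly varying of
index `-α`. -/
lemma tail_ratio {T H : ℝ → ℝ} {α : ℝ} (hHpos : ∀ x > (0 : ℝ), 0 < H x)
    (hslow : ∀ c > (0 : ℝ), Tendsto (fun x : ℝ => H (c * x) / H x) atTop (nhds 1))
    (htail : Tendsto (fun x : ℝ => T x / (x ^ (-α) * H x)) atTop (nhds 1))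
    {c : ℝ} (hc : 0 < c) :
    Tendsto (fun x => T (c * x) / T x) atTop (nhds (c ^ (-α))) := by
  have hcx : Tendsto (fun x : ℝ => c * x) atTop atTop := tendsto_id.const_mul_atTop hc
  have h := (((htail.comp hcx).div htail one_ne_zero).mul (hslow c hc)).const_mul (c ^ (-α))
  simp only [div_one, mul_one] at h
  refine h.congr' ?_
  filter_upwards [eventually_gt_atTop 0] with x hx
  have h1 := (hHpos x hx).ne'
  have h2 := (hHpos (c * x) (mul_pos hc hx)).ne'
  have h3 := (Real.rpow_pos_of_pos hx (-α)).ne'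
  have h4 := (Real.rpow_pos_of_pos hc (-α)).ne'
  simp only [Function.comp_apply, Pi.div_apply]
  rw [Real.mul_rpow hc.le hx.le]
  field_simp

theorem stmt1 (μ : Measure ℝ) [IsProbabilityMeasure μ] (hμ : μ (Ioi 0) = 1)
    (α : ℝ) (hα : 0 ≤ α) (H : ℝ → ℝ) (hHmeas : Measurable H)
    (hHpos : ∀ x > (0 : ℝ), 0 < H x)
    (hslow : ∀ c > (0 : ℝ), Tendsto (fun x : ℝ => H (c * x) / H x) atTop (nhds 1))
    (htail : Tendsto (fun x : ℝ => (μ (Ioi x)).toReal / (x ^ (-α) * H x))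
      atTop (nhds 1)) :
    Subexponential μ := by
  have hpos : ∀ x : ℝ, 0 < μ.real (Ioi x) := by
    intro x
    -- The quotient in `htail` is eventually nonzero, hence so is the tail; it is also antitone.
    obtain ⟨y, hy, hxy⟩ := ((htail.eventually_ne one_ne_zero).and (eventually_ge_atTop x)).exists
    have hy' : 0 < μ.real (Ioi y) :=
      measureReal_nonneg.lt_of_ne' (fun h0 => hy (by rw [← measureReal_def, h0, zero_div]))
    exact hy'.trans_le (measureReal_mono (Ioi_subset_Ioi hxy))
  have h0 := tendsto_tail_zero μ
  have hratio : ∀ {c : ℝ}, 0 < c → Tendsto (fun x => μ.real (Ioi (c * x)) / μ.real (Ioi x))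
      atTop (nhds (c ^ (-α))) :=
    fun hc => tail_ratio (T := fun x => μ.real (Ioi x)) hHpos hslow htail hc
  refine ⟨fun x _ => (ENNReal.toReal_pos_iff.1 (hpos x)).1, ?_⟩
  change Tendsto (fun x : ℝ => (μ.conv μ).real (Ioi x) / μ.real (Ioi x)) atTop (nhds 2)
  refine tendsto_order.2 ⟨fun a ha => ?_, fun a ha => ?_⟩
  · have hlim : Tendsto (fun x : ℝ => 2 - μ.real (Ioi x)) atTop (nhds 2) := by
      simpa using h0.const_sub 2
    filter_upwards [hlim.eventually_const_lt ha, eventually_ge_atTop 0] with x hx hx0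
    refine hx.trans_le ?_
    rw [le_div_iff₀ (hpos x)]
    linarith [conv_lower μ hμ hx0]
  · obtain ⟨δ, hδa, hδ⟩ : ∃ δ : ℝ, 2 * (1 - δ) ^ (-α) < a ∧ δ ∈ Ioo (0 : ℝ) 1 := by
      have hcont : Tendsto (fun δ : ℝ => 2 * (1 - δ) ^ (-α)) (nhdsWithin 0 (Ioi 0)) (nhds 2) := by
        have : ContinuousAt (fun δ : ℝ => 2 * (1 - δ) ^ (-α)) 0 :=
          continuousAt_const.mul
            ((continuousAt_const.sub continuousAt_id).rpow_const (Or.inl (by norm_num)))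
        simpa using this.tendsto.mono_left nhdsWithin_le_nhds
      exact ((hcont.eventually_lt_const ha).and (Ioo_mem_nhdsGT one_pos)).exists
    have hδx : Tendsto (fun x : ℝ => δ * x) atTop atTop := tendsto_id.const_mul_atTop hδ.1
    have hlim := ((hratio (sub_pos.2 hδ.2)).const_mul 2).add
      ((hratio hδ.1).mul (h0.comp hδx))
    rw [mul_zero, add_zero] at hlim
    filter_upwards [hlim.eventually_lt_const hδa] with x hx
    refine lt_of_le_of_lt ?_ hx
    rw [div_le_iff₀ (hpos x)]
    refine (conv_upper μ x δ).trans_eq ?_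
    have := (hpos x).ne'
    simp only [Function.comp_apply]
    field_simp
end

section
/- Let μ be a subexponential probability measure on ℝ with tail F̄(x) := μ((x,∞)). Then for every ε > 0, e^{εx} F̄(x) → +∞ as x → ∞. -/
/-!
A subexponential law is long-tailed: `F̄(x - 1) / F̄(x)` has limsup at most `1`. Indeed, for
`0 < y ≤ x`, splitting the event `X + Y > x` according to whether `Y > x`, `Y ≤ y` or `y < Y ≤ x`
gives
`(μ ∗ μ)((x,∞)) ≥ F̄(x) + (1 - F̄(y)) F̄(x) + (F̄(y) - F̄(x)) F̄(x - y)`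
(`conv_tail_lower`); dividing by `F̄(x)`, the left side tends to `2`, and `F̄(y) > 0` is then
cancelled.

Consequently `F̄(x - 1) ≤ e^{ε/2} F̄(x)` from some `x₀` on (`eventually_shift_le`), and iterating
this along `x₀ + n` shows that `F̄` decays at most like a multiple of `e^{-εx/2}`, so
`e^{εx} F̄(x)` is bounded below by a multiple of `e^{εx/2}`.
-/

open MeasureTheory Filter Set

lemma conv_tail_lower (μ : Measure ℝ) [IsProbabilityMeasure μ] (hμ : μ (Ioi 0) = 1)
    {x y : ℝ} (hy : 0 < y) (hxy : y ≤ x) :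
    μ.real (Ioi x) + (1 - μ.real (Ioi y)) * μ.real (Ioi x)
      + (μ.real (Ioi y) - μ.real (Ioi x)) * μ.real (Ioi (x - y)) ≤ (μ.conv μ).real (Ioi x) := by
  have h0 : μ.real (Ioi 0) = 1 := by simp [Measure.real, hμ]
  have e1 : μ.real (Ioc 0 y) = 1 - μ.real (Ioi y) := by
    rw [← h0, ← Ioi_sdiff_Ioi, measureReal_sdiff (Ioi_subset_Ioi hy.le) measurableSet_Ioi]
  have e2 : μ.real (Ioc y x) = μ.real (Ioi y) - μ.real (Ioi x) := by
    rw [← Ioi_sdiff_Ioi, measureReal_sdiff (Ioi_subset_Ioi hxy) measurableSet_Ioi]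
  have hconv : (μ.conv μ).real (Ioi x) = (μ.prod μ).real {p : ℝ × ℝ | x < p.1 + p.2} := by
    rw [Measure.conv, map_measureReal_apply (by fun_prop) measurableSet_Ioi]
    rfl
  have d1 : Disjoint (Ioi x ×ˢ Ioi (0 : ℝ)) (Ioc 0 y ×ˢ Ioi x) := by
    rw [Set.disjoint_left]
    rintro ⟨a, b⟩ ⟨h1, h2⟩ ⟨h3, h4⟩
    simp only [mem_Ioi, mem_Ioc] at *
    linarith
  have d2 : Disjoint (Ioi x ×ˢ Ioi (0 : ℝ) ∪ Ioc 0 y ×ˢ Ioi x) (Ioc y x ×ˢ Ioi (x - y)) := by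
    rw [Set.disjoint_left]
    rintro ⟨a, b⟩ (⟨h1, h2⟩ | ⟨h1, h2⟩) ⟨h3, h4⟩ <;>
    · simp only [mem_Ioi, mem_Ioc] at *
      linarith
  have hsum : (μ.prod μ).real ((Ioi x ×ˢ Ioi (0 : ℝ) ∪ Ioc 0 y ×ˢ Ioi x) ∪ Ioc y x ×ˢ Ioi (x - y))
      = μ.real (Ioi x) + (1 - μ.real (Ioi y)) * μ.real (Ioi x)
      + (μ.real (Ioi y) - μ.real (Ioi x)) * μ.real (Ioi (x - y)) := by
    rw [measureReal_union d2 (measurableSet_Ioc.prod measurableSet_Ioi),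
      measureReal_union d1 (measurableSet_Ioc.prod measurableSet_Ioi),
      measureReal_prod_prod, measureReal_prod_prod, measureReal_prod_prod, e1, e2, h0, mul_one]
  rw [← hsum, hconv]
  refine measureReal_mono ?_
  rintro ⟨a, b⟩ ((⟨h1, h2⟩ | ⟨h1, h2⟩) | ⟨h1, h2⟩) <;>
  · simp only [mem_Ioi, mem_Ioc, mem_ofPred_eq] at *
    linarith

lemma eventually_shift_le (μ : Measure ℝ) [IsProbabilityMeasure μ] (hμ : μ (Ioi 0) = 1)
    (hsub : Subexponential μ) {c : ℝ} (hc : 1 < c) :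
    ∀ᶠ x in atTop, μ.real (Ioi (x - 1)) ≤ c * μ.real (Ioi x) := by
  obtain ⟨hpos, hlim⟩ := hsub
  have hp : ∀ x > (0 : ℝ), 0 < μ.real (Ioi x) := fun x hx =>
    ENNReal.toReal_pos (hpos x hx).ne' (measure_ne_top _ _)
  have hy := hp 1 one_pos
  have hz := tendsto_tail_zero μ
  have hq : Tendsto (fun x : ℝ => ((μ.conv μ).real (Ioi x) / μ.real (Ioi x) - 2 + μ.real (Ioi 1))
      / (μ.real (Ioi 1) - μ.real (Ioi x))) atTop (nhds 1) := by
    have := ((hlim.sub_const 2).add_const (μ.real (Ioi 1))).div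
      (hz.const_sub (μ.real (Ioi 1))) (by simpa using hy.ne')
    rw [sub_self, zero_add, sub_zero, div_self hy.ne'] at this
    exact this
  filter_upwards [hq.eventually_lt_const hc, hz.eventually_lt_const hy, eventually_ge_atTop 1]
    with x h1 h2 h3
  have hx := hp x (by linarith)
  have hl := conv_tail_lower μ hμ one_pos h3
  have hd : 0 < μ.real (Ioi 1) - μ.real (Ioi x) := by linarith
  rw [div_lt_iff₀ hd] at h1
  have h4 : (μ.conv μ).real (Ioi x)
      < (c * (μ.real (Ioi 1) - μ.real (Ioi x)) + 2 - μ.real (Ioi 1)) * μ.real (Ioi x) := by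
    rw [← div_lt_iff₀ hx]
    linarith
  refine le_of_mul_le_mul_left ?_ hd
  nlinarith

theorem stmt3 (μ : Measure ℝ) [IsProbabilityMeasure μ] (hμ : μ (Ioi 0) = 1)
    (hsub : Subexponential μ) (ε : ℝ) (hε : 0 < ε) :
    Tendsto (fun x : ℝ => Real.exp (ε * x) * (μ (Ioi x)).toReal) atTop atTop := by
  have hc : 1 < Real.exp (ε / 2) := Real.one_lt_exp_iff.2 (by positivity)
  obtain ⟨x₁, hx₁⟩ := eventually_atTop.1 (eventually_shift_le μ hμ hsub hc)
  obtain ⟨x₀, h0, h1⟩ : ∃ x₀ : ℝ, 0 < x₀ ∧ x₁ ≤ x₀ :=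
    ⟨max x₁ 1, by positivity, le_max_left _ _⟩
  have hp : 0 < μ.real (Ioi x₀) :=
    ENNReal.toReal_pos (hsub.1 x₀ h0).ne' (measure_ne_top _ _)
  have hn : ∀ n : ℕ, μ.real (Ioi x₀) ≤ Real.exp (ε / 2 * n) * μ.real (Ioi (x₀ + n)) := by
    intro n
    induction n with
    | zero => simp
    | succ k ih =>
      have h := hx₁ (x₀ + (k + 1 : ℕ)) (by push_cast; linarith [k.cast_nonneg (α := ℝ)])
      rw [show x₀ + ((k + 1 : ℕ) : ℝ) - 1 = x₀ + k by push_cast; ring] at h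
      calc _ ≤ _ := ih
        _ ≤ Real.exp (ε / 2 * k) * (Real.exp (ε / 2) * μ.real (Ioi (x₀ + (k + 1 : ℕ)))) := by gcongr
        _ = _ := by
          rw [← mul_assoc, ← Real.exp_add]
          congr 2
          push_cast
          ring
  have hlow : Tendsto (fun x : ℝ => (μ.real (Ioi x₀) * Real.exp (ε / 2 * (x₀ - 1)))
      * Real.exp (ε / 2 * x)) atTop atTop :=
    (Real.tendsto_exp_atTop.comp (tendsto_id.const_mul_atTop (by positivity))).const_mul_atTop
      (by positivity)
  refine tendsto_atTop_mono' _ ?_ hlow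
  filter_upwards [eventually_ge_atTop x₀] with x hx
  -- With `n = ⌈x - x₀⌉₊`, the point `x₀ + n` lies in `[x, x + 1)`.
  have hceil := Nat.le_ceil (x - x₀)
  have hceil' := Nat.ceil_lt_add_one (sub_nonneg.2 hx)
  set n := ⌈x - x₀⌉₊
  have hmain : μ.real (Ioi x₀) ≤ Real.exp (ε / 2 * (x - x₀ + 1)) * μ.real (Ioi x) := by
    refine (hn n).trans ?_
    have : μ.real (Ioi (x₀ + n)) ≤ μ.real (Ioi x) :=
      measureReal_mono (Ioi_subset_Ioi (by linarith))
    gcongr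
  calc μ.real (Ioi x₀) * Real.exp (ε / 2 * (x₀ - 1)) * Real.exp (ε / 2 * x)
      ≤ Real.exp (ε / 2 * (x - x₀ + 1)) * μ.real (Ioi x) * Real.exp (ε / 2 * (x₀ - 1))
        * Real.exp (ε / 2 * x) := by gcongr
    _ = (Real.exp (ε / 2 * (x - x₀ + 1)) * Real.exp (ε / 2 * (x₀ - 1)) * Real.exp (ε / 2 * x))
        * μ.real (Ioi x) := by ring
    _ = Real.exp (ε * x) * (μ (Ioi x)).toReal := by
      rw [← Real.exp_add, ← Real.exp_add, Measure.real]
      congr 2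
      ring
end

section
/- Let μ be a σ-finite Borel measure on [0,∞) with μ({0}) = 0, and let g₁, g₂ : [0,∞) → ℝ be measurable functions such that for some λ₀ > 0, ∫ e^{-λ₀ γ} |gᵢ(γ)| μ(dγ) < ∞ for i = 1, 2, and g₂(γ) > 0 for all γ. For λ ≥ λ₀ set fᵢ(λ) := ∫ e^{-λγ} gᵢ(γ) μ(dγ). Assume: (i) for every b > 0, e^{bλ} f₂(λ) → +∞ as λ → ∞; (ii) g₁(γ)/g₂(γ) → 1 as γ → 0⁺. Then f₁(λ)/f₂(λ) → 1 as λ → ∞. -/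
/-!
Put `h = g₁ - g₂` and let `ε > 0`. Choose `δ > 0` with `|h| ≤ ε g₂` on `(0, δ)`. On `[δ, ∞)` and for
`l ≥ lam0` one has `exp (-l γ) ≤ exp (-(l - lam0) δ) exp (-lam0 γ)`. Integrating the two bounds gives
`|f₁ l - f₂ l| ≤ ε f₂ l + C exp (-(l - lam0) δ)` with `C = ∫ exp (-lam0 γ) |h γ|`. As
`exp (δ l) f₂ l → ∞`, the last term is eventually at most `ε f₂ l`, whence `|f₁ / f₂ - 1| ≤ 2 ε`.
-/

open MeasureTheory Filter Set

/-- The Laplace integrand at `l ≥ a` is dominated by the one at `a`. -/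
lemma integrable_exp_mul_of_le {μ : Measure ℝ} (hpos : ∀ᵐ γ ∂μ, 0 < γ) {g : ℝ → ℝ}
    (hg : Measurable g) {a l : ℝ} (hal : a ≤ l)
    (hint : Integrable (fun γ => Real.exp (-a * γ) * g γ) μ) :
    Integrable (fun γ => Real.exp (-l * γ) * g γ) μ := by
  refine hint.mono (by fun_prop) ?_
  filter_upwards [hpos] with γ hγ
  rw [norm_mul, norm_mul, Real.norm_of_nonneg (Real.exp_pos _).le,
    Real.norm_of_nonneg (Real.exp_pos _).le]
  gcongr

/-- Tauberian-type lemma: if `g₁ ∼ g₂` at `0⁺` and the Laplace transform of `g₂` decays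
slower than any exponential, then the Laplace transforms are asymptotically equivalent. -/
theorem stmt4 (μ : Measure ℝ) [SigmaFinite μ]
    (hsupp : μ (Iio 0) = 0) (hatom : μ {0} = 0)
    (g₁ g₂ : ℝ → ℝ) (hg₁ : Measurable g₁) (hg₂ : Measurable g₂)
    (lam0 : ℝ) (hlam0 : 0 < lam0)
    (hint₁ : Integrable (fun γ => Real.exp (-lam0 * γ) * g₁ γ) μ)
    (hint₂ : Integrable (fun γ => Real.exp (-lam0 * γ) * g₂ γ) μ)
    (hpos : ∀ γ : ℝ, 0 < g₂ γ)
    (hf₂ : ∀ b > (0 : ℝ),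
      Tendsto (fun l : ℝ => Real.exp (b * l) * ∫ γ, Real.exp (-l * γ) * g₂ γ ∂μ)
        atTop atTop)
    (hratio : Tendsto (fun γ : ℝ => g₁ γ / g₂ γ) (nhdsWithin 0 (Ioi 0)) (nhds 1)) :
    Tendsto (fun l : ℝ =>
        (∫ γ, Real.exp (-l * γ) * g₁ γ ∂μ) / ∫ γ, Real.exp (-l * γ) * g₂ γ ∂μ)
      atTop (nhds 1) := by
  have hpos0 : ∀ᵐ γ ∂μ, 0 < γ := by
    rw [ae_iff]
    have hset : {γ : ℝ | ¬ 0 < γ} = Iio 0 ∪ {0} := by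
      ext γ
      simp [le_iff_lt_or_eq]
    rw [hset]
    exact measure_union_null hsupp hatom
  rw [Metric.tendsto_nhds]
  intro η hη
  obtain ⟨ε, hε, hεη⟩ : ∃ ε : ℝ, 0 < ε ∧ 2 * ε < η := ⟨η / 4, by linarith, by linarith⟩
  obtain ⟨δ, hδ, hnear⟩ : ∃ δ > (0 : ℝ), ∀ γ, 0 < γ → γ < δ → |g₁ γ - g₂ γ| ≤ ε * g₂ γ := by
    obtain ⟨δ, hδ, hsub⟩ :=
      mem_nhdsGT_iff_exists_Ioo_subset.1 (Metric.tendsto_nhds.1 hratio ε hε)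
    refine ⟨δ, hδ, fun γ h0 h1 => ?_⟩
    have hd : |g₁ γ / g₂ γ - 1| < ε := hsub ⟨h0, h1⟩
    rw [div_sub_one (hpos γ).ne', abs_div, abs_of_pos (hpos γ), div_lt_iff₀ (hpos γ)] at hd
    exact hd.le
  have hintC : Integrable (fun γ => Real.exp (-lam0 * γ) * |g₁ γ - g₂ γ|) μ := by
    refine (hint₁.sub hint₂).abs.congr (Eventually.of_forall fun γ => ?_)
    simp only [Pi.sub_apply]
    rw [← mul_sub, abs_mul, abs_of_pos (Real.exp_pos _)]
  set C := ∫ γ, Real.exp (-lam0 * γ) * |g₁ γ - g₂ γ| ∂μ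
  filter_upwards [eventually_ge_atTop lam0,
    (hf₂ δ hδ).eventually_ge_atTop (Real.exp (lam0 * δ) * C / ε),
    (hf₂ δ hδ).eventually_gt_atTop 0] with l hl hbig hgt
  have hi₁ := integrable_exp_mul_of_le hpos0 hg₁ hl hint₁
  have hi₂ := integrable_exp_mul_of_le hpos0 hg₂ hl hint₂
  have hdiff : |(∫ γ, Real.exp (-l * γ) * g₁ γ ∂μ) - ∫ γ, Real.exp (-l * γ) * g₂ γ ∂μ|
      ≤ ε * (∫ γ, Real.exp (-l * γ) * g₂ γ ∂μ) + Real.exp (-(l - lam0) * δ) * C := by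
    rw [← integral_sub hi₁ hi₂, ← integral_const_mul, ← integral_const_mul,
      ← integral_add (hi₂.const_mul _) (hintC.const_mul _), ← Real.norm_eq_abs]
    refine norm_integral_le_of_norm_le ((hi₂.const_mul _).add (hintC.const_mul _)) ?_
    filter_upwards [hpos0] with γ hγ
    rw [← mul_sub, Real.norm_eq_abs, abs_mul, abs_of_pos (Real.exp_pos _)]
    rcases lt_or_ge γ δ with h | h
    · calc Real.exp (-l * γ) * |g₁ γ - g₂ γ| ≤ Real.exp (-l * γ) * (ε * g₂ γ) := by
            gcongr
            exact hnear γ hγ h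
        _ = ε * (Real.exp (-l * γ) * g₂ γ) := by ring
        _ ≤ _ := le_add_of_nonneg_right (by positivity)
    · have hexp : Real.exp (-l * γ) ≤ Real.exp (-(l - lam0) * δ) * Real.exp (-lam0 * γ) := by
        rw [← Real.exp_add]
        gcongr
        nlinarith [mul_nonneg (sub_nonneg.2 hl) (sub_nonneg.2 h)]
      calc Real.exp (-l * γ) * |g₁ γ - g₂ γ|
          ≤ Real.exp (-(l - lam0) * δ) * Real.exp (-lam0 * γ) * |g₁ γ - g₂ γ| := by gcongr
        _ = Real.exp (-(l - lam0) * δ) * (Real.exp (-lam0 * γ) * |g₁ γ - g₂ γ|) := by ring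
        _ ≤ _ := le_add_of_nonneg_left
            (mul_nonneg hε.le (mul_nonneg (Real.exp_pos _).le (hpos γ).le))
  set F₁ := ∫ γ, Real.exp (-l * γ) * g₁ γ ∂μ
  set F₂ := ∫ γ, Real.exp (-l * γ) * g₂ γ ∂μ
  have hF₂ : 0 < F₂ := (mul_pos_iff_of_pos_left (Real.exp_pos _)).1 hgt
  have htail : Real.exp (-(l - lam0) * δ) * C ≤ ε * F₂ := by
    rw [div_le_iff₀ hε] at hbig
    calc Real.exp (-(l - lam0) * δ) * C
        = Real.exp (-(δ * l)) * (Real.exp (lam0 * δ) * C) := by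
          rw [← mul_assoc, ← Real.exp_add]
          ring_nf
      _ ≤ Real.exp (-(δ * l)) * (Real.exp (δ * l) * F₂ * ε) := by gcongr
      _ = ε * F₂ := by
          rw [Real.exp_neg]
          field_simp
  rw [Real.dist_eq, div_sub_one hF₂.ne', abs_div, abs_of_pos hF₂, div_lt_iff₀ hF₂]
  nlinarith [mul_lt_mul_of_pos_right hεη hF₂]
end

section
/- Let (Ω, ℱ, P) be a probability space with a filtration (𝒞_u)_{u ≥ 0} of sub-σ-algebras of ℱ. Let (W_t)_{t ≥ 0} be a family of nonnegative measurable random variables with 0 < E[W_t] < ∞ for every t > 0. Suppose that for each u ≥ 0 there is an integrable 𝒞_u-measurable random variable M_u such that E[W_t | 𝒞_u] / E[W_t] → M_u almost surely as t → ∞, and E[M_u] = 1. Then (M_u)_{u ≥ 0} is a nonnegative martingale with respect to (𝒞_u): M_u ≥ 0 a.s. for every u, and for all 0 ≤ u ≤ v, E[M_v | 𝒞_u] = M_u almost surely. -/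
/-!
By Scheffé's lemma, the hypothesis `E[M u] = 1` upgrades the almost sure convergence of
`E[W t | 𝒞 u] / E[W t]` to `M u` to convergence in `L¹`, hence to convergence of the integrals over
every measurable set `s`. When `s ∈ 𝒞 u` and `u ≤ v`, both `E[W t | 𝒞 u]` and `E[W t | 𝒞 v]`
integrate over `s` to the integral of `W t`, so in the limit `M u` and `M v` have the same integral
over `s`; this characterizes `E[M v | 𝒞 u] = M u`. Nonnegativity passes to the limit.
-/

open MeasureTheory Filter Set

/-- Scheffé's lemma for probability densities, in the form of convergence of set integrals. -/
lemma tendsto_setIntegral_of_ae_tendsto_of_integral_eq_one {Ω : Type*} {mΩ : MeasurableSpace Ω}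
    {P : Measure Ω} {X : ℕ → Ω → ℝ} {Y : Ω → ℝ}
    (hX : ∀ n, Integrable (X n) P) (hY : Integrable Y P) (hX0 : ∀ n, 0 ≤ᵐ[P] X n)
    (hX1 : ∀ n, ∫ ω, X n ω ∂P = 1) (hY1 : ∫ ω, Y ω ∂P = 1)
    (hlim : ∀ᵐ ω ∂P, Tendsto (fun n => X n ω) atTop (nhds (Y ω))) (s : Set Ω) :
    Tendsto (fun n => ∫ ω in s, X n ω ∂P) atTop (nhds (∫ ω in s, Y ω ∂P)) := by
  have hmin : Tendsto (fun n => ∫ ω, min (X n ω) (Y ω) ∂P) atTop (nhds (∫ ω, Y ω ∂P)) := by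
    refine tendsto_integral_of_dominated_convergence (fun ω => |Y ω|)
      (fun n => ((hX n).inf hY).aestronglyMeasurable) hY.abs (fun n => ?_) ?_
    · filter_upwards [hX0 n] with ω h0
      have h0 : 0 ≤ X n ω := h0
      rw [Real.norm_eq_abs, abs_le]
      exact ⟨le_min ((neg_nonpos.2 (abs_nonneg _)).trans h0) (neg_abs_le _),
        (min_le_right _ _).trans (le_abs_self _)⟩
    · filter_upwards [hlim] with ω h
      simpa using h.min (tendsto_const_nhds (x := Y ω))
  -- `|x - y| = x + y - 2 * min x y`, whose integral is `2 - 2 * ∫ min (X n) Y`.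
  have habs : ∀ n, ∫ ω, |X n ω - Y ω| ∂P = 2 - 2 * ∫ ω, min (X n ω) (Y ω) ∂P := by
    intro n
    have hm : Integrable (fun ω => min (X n ω) (Y ω)) P := (hX n).inf hY
    have hs : Integrable (fun ω => X n ω + Y ω) P := (hX n).add hY
    calc ∫ ω, |X n ω - Y ω| ∂P = ∫ ω, (X n ω + Y ω - 2 * min (X n ω) (Y ω)) ∂P := by
          congr 1
          ext ω
          rcases le_total (X n ω) (Y ω) with h | h
          · rw [min_eq_left h, abs_of_nonpos (by linarith)]; ring
          · rw [min_eq_right h, abs_of_nonneg (by linarith)]; ring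
      _ = _ := by
          rw [integral_sub hs (hm.const_mul 2), integral_add (hX n) hY,
            integral_const_mul, hX1, hY1]
          norm_num
  have hL1 : Tendsto (fun n => ∫ ω, |X n ω - Y ω| ∂P) atTop (nhds 0) := by
    simp_rw [habs]
    have := (hmin.const_mul 2).const_sub 2
    rw [hY1] at this
    simpa using this
  rw [tendsto_iff_norm_sub_tendsto_zero]
  refine squeeze_zero (fun _ => norm_nonneg _) (fun n => ?_) hL1
  rw [← integral_sub (hX n).integrableOn hY.integrableOn]
  refine (norm_integral_le_integral_norm _).trans ?_
  exact setIntegral_le_integral ((hX n).sub hY).norm (ae_of_all _ fun _ => norm_nonneg _)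

/-- General penalization theorem, martingale part: if the normalized conditional
expectations of the weight process converge a.s. to `M u` with `E[M u] = 1`, then
`M` is a nonnegative martingale. -/
theorem stmt5 {Ω : Type*} {mΩ : MeasurableSpace Ω}
    (P : Measure Ω) [IsProbabilityMeasure P]
    (𝒞 : MeasureTheory.Filtration ℝ mΩ)
    (W : ℝ → Ω → ℝ)
    (hWmeas : ∀ t, Measurable (W t))
    (hWnn : ∀ t ω, 0 ≤ W t ω)
    (hWint : ∀ t > (0 : ℝ), Integrable (W t) P)
    (hWpos : ∀ t > (0 : ℝ), 0 < ∫ ω, W t ω ∂P)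
    (M : ℝ → Ω → ℝ)
    (hMint : ∀ u, 0 ≤ u → Integrable (M u) P)
    (hMmeas : ∀ u, 0 ≤ u → StronglyMeasurable[𝒞 u] (M u))
    (hconv : ∀ u, 0 ≤ u → ∀ᵐ ω ∂P,
      Tendsto (fun t : ℝ => (P[W t|𝒞 u]) ω / ∫ ω', W t ω' ∂P) atTop (nhds (M u ω)))
    (hE : ∀ u, 0 ≤ u → ∫ ω, M u ω ∂P = 1) :
    (∀ u, 0 ≤ u → 0 ≤ᵐ[P] M u) ∧
      (∀ u v, 0 ≤ u → u ≤ v → P[M v|𝒞 u] =ᵐ[P] M u) := by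
  -- The limit is taken along the positive times `n + 1`.
  have hpos : ∀ n : ℕ, (0 : ℝ) < (n : ℝ) + 1 := fun n => by positivity
  have hseq : Tendsto (fun n : ℕ => (n : ℝ) + 1) atTop atTop :=
    tendsto_atTop_add_const_right _ _ tendsto_natCast_atTop_atTop
  have hnn : ∀ u, ∀ n : ℕ, 0 ≤ᵐ[P]
      fun ω => (P[W (n + 1)|𝒞 u]) ω / ∫ ω', W (n + 1) ω' ∂P := by
    intro u n
    filter_upwards [condExp_nonneg (m := 𝒞 u) (ae_of_all P (hWnn (n + 1)))] with ω h
    exact div_nonneg h (hWpos _ (hpos n)).le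
  have hlim : ∀ u, 0 ≤ u → ∀ s, MeasurableSet[𝒞 u] s →
      Tendsto (fun n : ℕ => (∫ ω in s, W (n + 1) ω ∂P) / ∫ ω, W (n + 1) ω ∂P) atTop
        (nhds (∫ ω in s, M u ω ∂P)) := by
    intro u hu s hs
    have key := tendsto_setIntegral_of_ae_tendsto_of_integral_eq_one (P := P)
      (X := fun (n : ℕ) ω => (P[W (n + 1)|𝒞 u]) ω / ∫ ω', W (n + 1) ω' ∂P)
      (fun n => integrable_condExp.div_const _) (hMint u hu) (hnn u)
      (fun n => by
        rw [integral_div, integral_condExp (𝒞.le u)]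
        exact div_self (hWpos _ (hpos n)).ne')
      (hE u hu) ((hconv u hu).mono fun ω h => h.comp hseq) s
    refine key.congr fun n => ?_
    rw [integral_div, setIntegral_condExp (𝒞.le u) (hWint _ (hpos n)) hs]
  refine ⟨fun u hu => ?_, fun u v hu huv => ?_⟩
  · filter_upwards [hconv u hu, ae_all_iff.2 (hnn u)] with ω h h0
    exact ge_of_tendsto' (h.comp hseq) h0
  · refine (ae_eq_condExp_of_forall_setIntegral_eq (𝒞.le u) (hMint v (hu.trans huv))
      (fun s _ _ => (hMint u hu).integrableOn) (fun s hs _ => ?_)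
      (hMmeas u hu).aestronglyMeasurable).symm
    exact tendsto_nhds_unique (hlim u hu s hs) (hlim v (hu.trans huv) s (𝒞.mono huv s hs))
end

section
/- Let 0 < α < 1 and define functions C_n : [0,∞) → ℝ recursively by C₀(x) := x^{2α}/(2α) and C_{n+1}(x) := ∫_0^x y^{2α−1} ( ∫_0^y 2 z^{1−2α} C_n(z) dz ) dy. Then for every n ≥ 0 and x ≥ 0, C_n(x) = Γ(α) · x^{2α+2n} / ( 2^{n+1} · Γ(n+1) · Γ(n+1+α) ). -/
/-!
The formula is proved by induction on `n`. The base case is `Γ(α + 1) = α Γ(α)`. In the inductive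
step `C n` is a monomial `K z ^ (2α + 2n)`, so both integrals are integrals of powers
(`integral_Ioc_rpow`): the inner one is `K y ^ (2n + 2) / (n + 1)`, and the outer one multiplies
the result by `x ^ (2α + 2n + 2)` over `2 (n + 1 + α)`. The factor `1 / (2 (n + 1) (n + 1 + α))`
gained is absorbed by the functional equation of `Γ` at `n + 1` and at `n + 1 + α`.
-/

open MeasureTheory Filter Set

lemma integral_Ioc_rpow {r x : ℝ} (hr : -1 < r) (hx : 0 ≤ x) :
    ∫ y in Ioc (0 : ℝ) x, y ^ r = x ^ (r + 1) / (r + 1) := by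
  rw [← intervalIntegral.integral_of_le hx, integral_rpow (Or.inl hr),
    Real.zero_rpow (by linarith), sub_zero]

/-- One step of the recursion sends the monomial `K z ^ (2α + 2n)` to a monomial of degree
higher by `2`. -/
lemma step_monomial {α : ℝ} (hα0 : 0 < α) (n : ℕ) (K : ℝ) {f : ℝ → ℝ}
    (hf : ∀ z : ℝ, 0 ≤ z → f z = K * z ^ (2 * α + 2 * n)) {x : ℝ} (hx : 0 ≤ x) :
    ∫ y in Ioc (0 : ℝ) x,
        y ^ (2 * α - 1) * ∫ z in Ioc (0 : ℝ) y, 2 * z ^ (1 - 2 * α) * f z =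
      K / (2 * (n + 1) * (n + 1 + α)) * x ^ (2 * α + 2 * (n + 1 : ℝ)) := by
  have hn : (0 : ℝ) ≤ n := n.cast_nonneg
  have inner : ∀ y : ℝ, 0 ≤ y →
      ∫ z in Ioc (0 : ℝ) y, 2 * z ^ (1 - 2 * α) * f z =
        K / (n + 1) * y ^ (2 * (n : ℝ) + 2) := by
    intro y hy
    have h : ∫ z in Ioc (0 : ℝ) y, 2 * z ^ (1 - 2 * α) * f z =
        ∫ z in Ioc (0 : ℝ) y, (2 * K) * z ^ (2 * (n : ℝ) + 1) := by
      refine setIntegral_congr_fun measurableSet_Ioc fun z hz => ?_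
      have e : z ^ (2 * (n : ℝ) + 1) = z ^ (1 - 2 * α) * z ^ (2 * α + 2 * n) := by
        rw [← Real.rpow_add hz.1]
        congr 1
        ring
      simp only [hf z hz.1.le, e]
      ring
    rw [h, integral_const_mul, integral_Ioc_rpow (by linarith) hy,
      show 2 * (n : ℝ) + 1 + 1 = 2 * n + 2 by ring]
    field_simp
  have outer : ∫ y in Ioc (0 : ℝ) x,
        y ^ (2 * α - 1) * ∫ z in Ioc (0 : ℝ) y, 2 * z ^ (1 - 2 * α) * f z =
      ∫ y in Ioc (0 : ℝ) x, K / (n + 1) * y ^ (2 * α + 2 * n + 1) := by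
    refine setIntegral_congr_fun measurableSet_Ioc fun y hy => ?_
    have e : y ^ (2 * α + 2 * n + 1) = y ^ (2 * α - 1) * y ^ (2 * (n : ℝ) + 2) := by
      rw [← Real.rpow_add hy.1]
      congr 1
      ring
    simp only [inner y hy.1.le, e]
    ring
  rw [outer, integral_const_mul, integral_Ioc_rpow (by linarith) hx,
    show 2 * α + 2 * n + 1 + 1 = 2 * α + 2 * (n + 1 : ℝ) by ring]
  have : (n : ℝ) + 1 + α ≠ 0 := by positivity
  have : 2 * α + 2 * (n + 1 : ℝ) ≠ 0 := by positivity
  field_simp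
  ring

/-- Explicit formula for the iterated kernels `Cₙ` of the Bessel process of
dimension `δ = 2 - 2α` killed at `0`. -/
theorem stmt12 (α : ℝ) (hα0 : 0 < α) (hα1 : α < 1)
    (C : ℕ → ℝ → ℝ)
    (hC0 : ∀ x : ℝ, 0 ≤ x → C 0 x = x ^ (2 * α) / (2 * α))
    (hCrec : ∀ n : ℕ, ∀ x : ℝ, 0 ≤ x →
      C (n + 1) x =
        ∫ y in Ioc (0 : ℝ) x,
          y ^ (2 * α - 1) * ∫ z in Ioc (0 : ℝ) y, 2 * z ^ (1 - 2 * α) * C n z) :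
    ∀ n : ℕ, ∀ x : ℝ, 0 ≤ x →
      C n x = Real.Gamma α * x ^ (2 * α + 2 * n) /
        (2 ^ (n + 1) * Real.Gamma ((n : ℝ) + 1) * Real.Gamma ((n : ℝ) + 1 + α)) := by
  intro n
  induction n with
  | zero =>
    intro x hx
    have hΓ : Real.Gamma α ≠ 0 := (Real.Gamma_pos_of_pos hα0).ne'
    rw [hC0 x hx]
    simp only [Nat.cast_zero, mul_zero, add_zero, zero_add, pow_one, Real.Gamma_one, mul_one]
    rw [add_comm 1 α, Real.Gamma_add_one hα0.ne']
    field_simp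
  | succ n ih =>
    intro x hx
    have h1 : (0 : ℝ) < (n : ℝ) + 1 := by positivity
    have h2 : (0 : ℝ) < (n : ℝ) + 1 + α := by positivity
    have g1 : Real.Gamma ((n : ℝ) + 1) ≠ 0 := (Real.Gamma_pos_of_pos h1).ne'
    have g2 : Real.Gamma ((n : ℝ) + 1 + α) ≠ 0 := (Real.Gamma_pos_of_pos h2).ne'
    rw [hCrec n x hx, step_monomial hα0 n
      (Real.Gamma α / (2 ^ (n + 1) * Real.Gamma ((n : ℝ) + 1) * Real.Gamma ((n : ℝ) + 1 + α)))
      (fun z hz => by rw [ih z hz]; ring) hx]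
    push_cast
    rw [show (n : ℝ) + 1 + 1 + α = (n + 1 + α) + 1 by ring, Real.Gamma_add_one h1.ne',
      Real.Gamma_add_one h2.ne']
    field_simp
    ring
end

section
/- For all t > 0 and all x, y ∈ ℝ, (1/π) ∫_0^∞ e^{-γ t} cos(x√(2γ)) cos(y√(2γ)) (2γ)^{-1/2} dγ = (1 / (2√(2πt))) · ( e^{-(x−y)²/(2t)} + e^{-(x+y)²/(2t)} ). -/
/-!
The substitution `γ = u² / 2` absorbs the density `(2γ)^{-1/2}` and turns the left-hand side into
`(1/π) ∫₀^∞ e^{-t u²/2} cos (x u) cos (y u) du`. Writing the product of cosines as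
`(cos ((x - y) u) + cos ((x + y) u)) / 2` reduces the claim to the cosine transform of a Gaussian
(`integral_exp_mul_cos_Ioi`), which is half the real part of its Fourier transform.
-/

open MeasureTheory Filter Set Real

lemma integrable_exp_mul_cos {t : ℝ} (ht : 0 < t) (a : ℝ) :
    Integrable fun u : ℝ => Real.exp (-(t / 2) * u ^ 2) * Real.cos (a * u) := by
  refine (integrable_exp_neg_mul_sq (half_pos ht)).mul_bdd (c := 1) ?_ ?_
  · exact (by fun_prop : Continuous fun u : ℝ => Real.cos (a * u)).aestronglyMeasurable
  · exact ae_of_all _ fun u => by simpa using Real.abs_cos_le_one (a * u)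

/-- Real part of the Fourier transform of a Gaussian. -/
lemma integral_exp_mul_cos {t : ℝ} (ht : 0 < t) (a : ℝ) :
    ∫ u : ℝ, Real.exp (-(t / 2) * u ^ 2) * Real.cos (a * u)
      = Real.sqrt (2 * π / t) * Real.exp (-a ^ 2 / (2 * t)) := by
  have hb : 0 < ((t / 2 : ℝ) : ℂ).re := by simpa using ht
  have key := fourierIntegral_gaussian hb (a : ℂ)
  have hint : Integrable fun u : ℝ =>
      Complex.exp (Complex.I * a * u) * Complex.exp (-((t / 2 : ℝ) : ℂ) * u ^ 2) := by
    refine ((integrable_cexp_neg_mul_sq hb).bdd_mul (c := 1) ?_ ?_)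
    · exact (by fun_prop : Continuous fun u : ℝ =>
        Complex.exp (Complex.I * a * u)).aestronglyMeasurable
    · refine ae_of_all _ fun u => ?_
      simp [Complex.norm_exp]
  have hre := congrArg Complex.re key
  have h1 : (∫ u : ℝ, Complex.exp (Complex.I * a * u) *
      Complex.exp (-((t / 2 : ℝ) : ℂ) * u ^ 2)).re
      = ∫ u : ℝ, (Complex.exp (Complex.I * a * u) *
          Complex.exp (-((t / 2 : ℝ) : ℂ) * u ^ 2)).re := (integral_re hint).symm
  rw [h1] at hre
  have h2 : ∀ u : ℝ, (Complex.exp (Complex.I * a * u) *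
      Complex.exp (-((t / 2 : ℝ) : ℂ) * u ^ 2)).re
      = Real.exp (-(t / 2) * u ^ 2) * Real.cos (a * u) := by
    intro u
    have e1 : Complex.exp (-((t / 2 : ℝ) : ℂ) * u ^ 2)
        = ((Real.exp (-(t / 2) * u ^ 2) : ℝ) : ℂ) := by push_cast; rfl
    have e2 : Complex.I * a * u = ((a * u : ℝ) : ℂ) * Complex.I := by push_cast; ring
    rw [e1, e2, Complex.re_mul_ofReal, Complex.exp_ofReal_mul_I_re, mul_comm]
  simp only [h2] at hre
  rw [hre]
  have e3 : ((π : ℂ) / ((t / 2 : ℝ) : ℂ)) ^ (1 / 2 : ℂ) = ((Real.sqrt (2 * π / t) : ℝ) : ℂ) := by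
    rw [Real.sqrt_eq_rpow, Complex.ofReal_cpow (by positivity)]
    congr 1
    · push_cast
      field_simp
    · push_cast
      rfl
  have e4 : Complex.exp (-(a : ℂ) ^ 2 / (4 * ((t / 2 : ℝ) : ℂ)))
      = ((Real.exp (-a ^ 2 / (2 * t)) : ℝ) : ℂ) := by
    push_cast
    congr 2
    ring
  rw [e3, e4, ← Complex.ofReal_mul, Complex.ofReal_re]

/-- Evenness of the integrand halves the integral over the line. -/
lemma integral_exp_mul_cos_Ioi {t : ℝ} (ht : 0 < t) (a : ℝ) :
    ∫ u in Ioi (0 : ℝ), Real.exp (-(t / 2) * u ^ 2) * Real.cos (a * u)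
      = Real.sqrt (2 * π / t) * Real.exp (-a ^ 2 / (2 * t)) / 2 := by
  have h := integral_comp_abs (f := fun u : ℝ => Real.exp (-(t / 2) * u ^ 2) * Real.cos (a * u))
  have h' : ∀ u : ℝ, Real.cos (a * |u|) = Real.cos (a * u) := by
    intro u
    rcases abs_choice u with hu | hu <;> simp [hu]
  simp only [sq_abs, h'] at h
  rw [integral_exp_mul_cos ht] at h
  linarith

/-- The substitution `γ = u² / 2` on the half-line. -/
lemma integral_comp_sq_half_Ioi (g : ℝ → ℝ) :
    ∫ γ in Ioi (0 : ℝ), g γ = ∫ u in Ioi (0 : ℝ), u * g (u ^ 2 / 2) := by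
  have himg : (fun u : ℝ => u ^ 2 / 2) '' Ioi 0 = Ioi 0 := by
    ext γ
    constructor
    · rintro ⟨u, hu, rfl⟩
      have : 0 < u := hu
      exact mem_Ioi.2 (by positivity)
    · intro hγ
      have hγ : 0 < γ := hγ
      refine ⟨Real.sqrt (2 * γ), mem_Ioi.2 (by positivity), ?_⟩
      simp only
      rw [Real.sq_sqrt (by positivity)]
      ring
  have hinj : InjOn (fun u : ℝ => u ^ 2 / 2) (Ioi 0) := by
    intro u hu v hv huv
    have hu : 0 < u := hu
    have hv : 0 < v := hv
    have huv : u ^ 2 / 2 = v ^ 2 / 2 := huv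
    nlinarith
  have hderiv : ∀ u ∈ Ioi (0 : ℝ), HasDerivWithinAt (fun u : ℝ => u ^ 2 / 2) u (Ioi 0) u := by
    intro u _
    have h := ((hasDerivAt_pow 2 u).div_const 2).hasDerivWithinAt (s := Ioi 0)
    exact h.congr_deriv (by norm_num)
  have h := integral_image_eq_integral_abs_deriv_smul measurableSet_Ioi hderiv hinj g
  rw [himg] at h
  rw [h]
  refine setIntegral_congr_fun measurableSet_Ioi fun u hu => ?_
  simp only [smul_eq_mul, abs_of_pos (mem_Ioi.1 hu)]

/-- Spectral representation of the transition density of reflecting Brownian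
motion on `[0,∞)`. -/
theorem stmt13 (t x y : ℝ) (ht : 0 < t) :
    (1 / π) * ∫ γ in Ioi (0 : ℝ),
        Real.exp (-γ * t) * Real.cos (x * Real.sqrt (2 * γ)) *
          Real.cos (y * Real.sqrt (2 * γ)) / Real.sqrt (2 * γ)
      = (1 / (2 * Real.sqrt (2 * π * t))) *
          (Real.exp (-(x - y) ^ 2 / (2 * t)) + Real.exp (-(x + y) ^ 2 / (2 * t))) := by
  have hsub : ∫ γ in Ioi (0 : ℝ),
        Real.exp (-γ * t) * Real.cos (x * Real.sqrt (2 * γ)) *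
          Real.cos (y * Real.sqrt (2 * γ)) / Real.sqrt (2 * γ)
      = ∫ u in Ioi (0 : ℝ),
          (Real.exp (-(t / 2) * u ^ 2) * Real.cos ((x - y) * u)
            + Real.exp (-(t / 2) * u ^ 2) * Real.cos ((x + y) * u)) / 2 := by
    rw [integral_comp_sq_half_Ioi]
    refine setIntegral_congr_fun measurableSet_Ioi fun u hu => ?_
    have hu : 0 < u := hu
    have hs : Real.sqrt (2 * (u ^ 2 / 2)) = u := by
      rw [mul_div_cancel₀ _ (two_ne_zero), Real.sqrt_sq hu.le]
    have he : -(u ^ 2 / 2) * t = -(t / 2) * u ^ 2 := by ring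
    simp only [hs, he, sub_mul, add_mul, Real.cos_sub, Real.cos_add]
    field_simp
    ring
  rw [hsub, integral_div, integral_add (integrable_exp_mul_cos ht _).integrableOn
    (integrable_exp_mul_cos ht _).integrableOn, integral_exp_mul_cos_Ioi ht,
    integral_exp_mul_cos_Ioi ht]
  have hc : Real.sqrt (2 * π / t) * Real.sqrt (2 * π * t) = 2 * π := by
    rw [← Real.sqrt_mul (by positivity),
      show 2 * π / t * (2 * π * t) = (2 * π) ^ 2 by field_simp, Real.sqrt_sq (by positivity)]
  have hpos : 0 < Real.sqrt (2 * π * t) := by positivity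
  have hc' : Real.sqrt (2 * π / t) = 2 * π / Real.sqrt (2 * π * t) := by
    rw [eq_div_iff hpos.ne', hc]
  rw [hc']
  field_simp
end

section
/- For all t > 0 and all x, y ∈ ℝ, (1/π) ∫_0^∞ e^{-γ t} sin(x√(2γ)) sin(y√(2γ)) (2γ)^{-1/2} dγ = (1 / (2√(2πt))) · ( e^{-(x−y)²/(2t)} − e^{-(x+y)²/(2t)} ). -/
open MeasureTheory Filter Set Real

/-!
The substitution `γ = s² / 2` turns the integral into `∫₀^∞ exp (-t s² / 2) sin (x s) sin (y s) ds`.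
Since `2 sin (x s) sin (y s) = cos ((x - y) s) - cos ((x + y) s)`, it is a difference of two Gaussian
cosine transforms; these are evaluated in `killedBM_integral_Ioi_cos` as the real part of the Fourier
transform of a Gaussian, halved by evenness.
-/

lemma killedBM_integrable_cexp (b a : ℝ) (hb : 0 < b) :
    Integrable fun s : ℝ => Complex.exp (Complex.I * a * s) * Complex.exp (-b * s ^ 2) := by
  have h := integrable_cexp_quadratic (b := (b : ℂ)) (by simpa using hb) (Complex.I * a) 0
  refine h.congr (ae_of_all _ fun s => ?_)
  simp only [← Complex.exp_add]
  congr 1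
  ring

lemma killedBM_re_cexp (b a s : ℝ) :
    (Complex.exp (Complex.I * a * s) * Complex.exp (-b * s ^ 2)).re
      = Real.exp (-b * s ^ 2) * Real.cos (a * s) := by
  have h1 : Complex.exp (-b * s ^ 2) = ((Real.exp (-b * s ^ 2) : ℝ) : ℂ) := by push_cast; rfl
  have h2 : Complex.I * a * s = ((a * s : ℝ) : ℂ) * Complex.I := by push_cast; ring
  rw [h1, h2, Complex.re_mul_ofReal, Complex.exp_ofReal_mul_I_re, mul_comm]

lemma killedBM_integrable_cos (b a : ℝ) (hb : 0 < b) :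
    Integrable fun s : ℝ => Real.exp (-b * s ^ 2) * Real.cos (a * s) := by
  refine (killedBM_integrable_cexp b a hb).re.congr (ae_of_all _ fun s => ?_)
  exact killedBM_re_cexp b a s

lemma killedBM_integral_Ioi_cos (b a : ℝ) (hb : 0 < b) :
    ∫ s in Ioi (0 : ℝ), Real.exp (-b * s ^ 2) * Real.cos (a * s)
      = Real.sqrt (π / b) * Real.exp (-a ^ 2 / (4 * b)) / 2 := by
  have hR : ∫ s : ℝ, Real.exp (-b * s ^ 2) * Real.cos (a * s)
      = Real.sqrt (π / b) * Real.exp (-a ^ 2 / (4 * b)) := by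
    have h := congrArg Complex.re
      (fourierIntegral_gaussian (b := (b : ℂ)) (by simpa using hb) (a : ℂ))
    have h3 : ((π : ℂ) / b) ^ (1 / 2 : ℂ) * Complex.exp (-(a : ℂ) ^ 2 / (4 * b))
        = ((Real.sqrt (π / b) * Real.exp (-a ^ 2 / (4 * b)) : ℝ) : ℂ) := by
      rw [Real.sqrt_eq_rpow, Complex.ofReal_mul, Complex.ofReal_cpow (by positivity)]
      push_cast
      rfl
    rw [h3, Complex.ofReal_re] at h
    rw [← h]
    have h4 := integral_re (𝕜 := ℂ) (killedBM_integrable_cexp b a hb)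
    refine Eq.trans ?_ h4
    exact integral_congr_ae (ae_of_all _ fun s => (killedBM_re_cexp b a s).symm)
  have hE := integral_comp_abs (f := fun s : ℝ => Real.exp (-b * s ^ 2) * Real.cos (a * s))
  have hA : ∀ s : ℝ, Real.cos (a * |s|) = Real.cos (a * s) := fun s => by
    rcases abs_choice s with h | h <;> rw [h]
    rw [mul_neg, Real.cos_neg]
  simp only [sq_abs, hA] at hE
  linarith

/-- The substitution `γ = s² / 2`; the Jacobian `s` cancels the weight `1 / √(2γ)`. -/
lemma killedBM_substitution (t x y : ℝ) :
    ∫ γ in Ioi (0 : ℝ),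
        Real.exp (-γ * t) * Real.sin (x * Real.sqrt (2 * γ)) *
          Real.sin (y * Real.sqrt (2 * γ)) / Real.sqrt (2 * γ)
      = ∫ s in Ioi (0 : ℝ),
          Real.exp (-(t / 2) * s ^ 2) * (Real.sin (x * s) * Real.sin (y * s)) := by
  have himg : (fun s : ℝ => s ^ 2 / 2) '' Ioi 0 = Ioi 0 := by
    ext g
    constructor
    · rintro ⟨s, hs, rfl⟩
      have hs : 0 < s := hs
      show 0 < s ^ 2 / 2
      positivity
    · intro hg
      have hg : 0 < g := hg
      refine ⟨Real.sqrt (2 * g), Real.sqrt_pos.2 (by positivity), ?_⟩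
      show Real.sqrt (2 * g) ^ 2 / 2 = g
      rw [Real.sq_sqrt (by positivity)]
      ring
  have hinj : InjOn (fun s : ℝ => s ^ 2 / 2) (Ioi 0) := by
    intro u hu v hv huv
    have hu : 0 < u := hu
    have hv : 0 < v := hv
    have huv : u ^ 2 / 2 = v ^ 2 / 2 := huv
    exact (pow_left_inj₀ hu.le hv.le two_ne_zero).1 (by linarith)
  have hd : ∀ s ∈ Ioi (0 : ℝ), HasDerivWithinAt (fun s : ℝ => s ^ 2 / 2) s (Ioi 0) s := by
    intro s _
    have h := ((hasDerivAt_pow 2 s).div_const 2).hasDerivWithinAt (s := Ioi 0)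
    exact h.congr_deriv (by norm_num)
  have h := integral_image_eq_integral_abs_deriv_smul measurableSet_Ioi hd hinj
    (fun γ : ℝ => Real.exp (-γ * t) * Real.sin (x * Real.sqrt (2 * γ)) *
          Real.sin (y * Real.sqrt (2 * γ)) / Real.sqrt (2 * γ))
  rw [himg] at h
  rw [h]
  refine setIntegral_congr_fun measurableSet_Ioi fun s hs => ?_
  have hs : 0 < s := hs
  have hsq : Real.sqrt (2 * (s ^ 2 / 2)) = s := by
    rw [mul_div_cancel₀ _ two_ne_zero, Real.sqrt_sq hs.le]
  have he : -(s ^ 2 / 2) * t = -(t / 2) * s ^ 2 := by ring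
  simp only [hsq, he, abs_of_pos hs, smul_eq_mul]
  field_simp

/-- Spectral representation of the transition density of Brownian motion on
`[0,∞)` killed at `0`. -/
theorem stmt14 (t x y : ℝ) (ht : 0 < t) :
    (1 / π) * ∫ γ in Ioi (0 : ℝ),
        Real.exp (-γ * t) * Real.sin (x * Real.sqrt (2 * γ)) *
          Real.sin (y * Real.sqrt (2 * γ)) / Real.sqrt (2 * γ)
      = (1 / (2 * Real.sqrt (2 * π * t))) *
          (Real.exp (-(x - y) ^ 2 / (2 * t)) - Real.exp (-(x + y) ^ 2 / (2 * t))) := by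
  have hb : 0 < t / 2 := by positivity
  have hprod : ∀ s : ℝ, Real.exp (-(t / 2) * s ^ 2) * (Real.sin (x * s) * Real.sin (y * s))
      = (Real.exp (-(t / 2) * s ^ 2) * Real.cos ((x - y) * s)
          - Real.exp (-(t / 2) * s ^ 2) * Real.cos ((x + y) * s)) / 2 := fun s => by
    rw [sub_mul, add_mul, Real.cos_sub, Real.cos_add]
    ring
  rw [killedBM_substitution]
  simp only [hprod]
  rw [integral_div, integral_sub (killedBM_integrable_cos _ _ hb).integrableOn
    (killedBM_integrable_cos _ _ hb).integrableOn, killedBM_integral_Ioi_cos _ _ hb,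
    killedBM_integral_Ioi_cos _ _ hb, show 4 * (t / 2) = 2 * t by ring]
  have hS : 0 < Real.sqrt (2 * π * t) := Real.sqrt_pos.2 (by positivity)
  have hsqrt : Real.sqrt (π / (t / 2)) = 2 * π / Real.sqrt (2 * π * t) := by
    rw [show π / (t / 2) = (2 * π) ^ 2 / (2 * π * t) by field_simp,
      Real.sqrt_div (by positivity), Real.sqrt_sq (by positivity)]
  rw [hsqrt]
  field_simp
end

section
/- For all t > 0 and all x ≥ 0, (1/π) ∫_0^∞ e^{-γ t} sin(x√(2γ)) dγ = x · t^{-3/2} · (2π)^{-1/2} · e^{-x²/(2t)}. -/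
/-!
Substituting `γ = u ^ 2` and writing `c = x * √2`, the integral becomes
`∫ u in (0, ∞), 2 * u * exp (-t * u ^ 2) * sin (c * u)`. Integrating by parts (the boundary terms of
`exp (-t * u ^ 2) * sin (c * u)` vanish at `0` and at `∞`) turns it into `c / t` times
`∫ u in (0, ∞), exp (-t * u ^ 2) * cos (c * u)`, which is half of the Fourier transform of a Gaussian
(`integral_Ioi_exp_mul_cos`).
-/

open MeasureTheory Filter Set Real

/-- The cosine transform of a Gaussian: half the real part of its Fourier transform. -/
lemma integral_Ioi_exp_mul_cos (t c : ℝ) (ht : 0 < t) :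
    ∫ u in Ioi (0 : ℝ), Real.exp (-t * u ^ 2) * Real.cos (c * u)
      = √(π / t) * Real.exp (-c ^ 2 / (4 * t)) / 2 := by
  have hF := fourierIntegral_gaussian (b := (t : ℂ)) (by simpa using ht) (c : ℂ)
  have hint : Integrable fun u : ℝ =>
      Complex.exp (Complex.I * c * u) * Complex.exp (-(t : ℂ) * (u : ℂ) ^ 2) := by
    have h := integrable_cexp_neg_mul_sq (b := (t : ℂ)) (by simpa using ht)
    refine h.bdd_mul (c := 1) (by fun_prop) (ae_of_all _ fun u => ?_)
    rw [Complex.norm_exp]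
    simp
  have hre := congrArg Complex.re hF
  have h1 : (∫ u : ℝ, Complex.exp (Complex.I * c * u) * Complex.exp (-(t : ℂ) * (u : ℂ) ^ 2)).re
      = ∫ u : ℝ, Real.exp (-t * u ^ 2) * Real.cos (c * u) := by
    have := integral_re hint
    simp only [RCLike.re_eq_complex_re] at this
    rw [← this]
    congr 1
    ext u
    rw [← Complex.exp_add, Complex.exp_re]
    congr 2 <;> simp [pow_two]
  have h2 : ((π / t : ℂ) ^ (1 / 2 : ℂ) * Complex.exp (-(c : ℂ) ^ 2 / (4 * t))).re
      = √(π / t) * Real.exp (-c ^ 2 / (4 * t)) := by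
    rw [Real.sqrt_eq_rpow, ← Complex.ofReal_re (_ * _)]
    congr 1
    rw [Complex.ofReal_mul, Complex.ofReal_cpow (by positivity)]
    push_cast
    rfl
  rw [h1, h2] at hre
  rw [← hre]
  have h3 := integral_comp_abs (f := fun u => Real.exp (-t * u ^ 2) * Real.cos (c * u))
  have h4 : ∀ u : ℝ, Real.cos (c * |u|) = Real.cos (c * u) := by
    intro u
    rcases abs_choice u with h | h <;> rw [h]
    rw [mul_neg, Real.cos_neg]
  simp only [sq_abs, h4] at h3
  rw [h3]
  ring

/-- Integration by parts against the Gaussian; all boundary terms vanish. -/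
lemma integral_Ioi_mul_exp_mul_sin (t c : ℝ) (ht : 0 < t) :
    ∫ u in Ioi (0 : ℝ), 2 * u * (Real.exp (-t * u ^ 2) * Real.sin (c * u))
      = c / t * ∫ u in Ioi (0 : ℝ), Real.exp (-t * u ^ 2) * Real.cos (c * u) := by
  have hi1 : Integrable fun u : ℝ => 2 * u * (Real.exp (-t * u ^ 2) * Real.sin (c * u)) := by
    have h := ((integrable_mul_exp_neg_mul_sq ht).const_mul 2).mul_bdd (c := 1)
      (g := fun u => Real.sin (c * u)) (by fun_prop)
      (ae_of_all _ fun u => by simpa using Real.abs_sin_le_one _)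
    refine h.congr (ae_of_all _ fun u => ?_)
    simp only
    ring
  have hi2 : Integrable fun u : ℝ => Real.exp (-t * u ^ 2) * Real.cos (c * u) :=
    (integrable_exp_neg_mul_sq ht).mul_bdd (c := 1) (by fun_prop)
      (ae_of_all _ fun u => by simpa using Real.abs_cos_le_one _)
  have hd : ∀ u ∈ Ioi (0 : ℝ), HasDerivAt (fun u => Real.exp (-t * u ^ 2) * Real.sin (c * u))
      (c * (Real.exp (-t * u ^ 2) * Real.cos (c * u))
        - t * (2 * u * (Real.exp (-t * u ^ 2) * Real.sin (c * u)))) u := by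
    intro u _
    have h := (((hasDerivAt_pow 2 u).const_mul (-t)).exp).mul
      (((hasDerivAt_id u).const_mul c).sin)
    refine h.congr_deriv ?_
    simp
    ring
  have hg : Tendsto (fun u : ℝ => Real.exp (-t * u ^ 2)) atTop (nhds 0) := by
    refine Real.tendsto_exp_atBot.comp ?_
    exact (tendsto_pow_atTop two_ne_zero).const_mul_atTop_of_neg (neg_lt_zero.mpr ht)
  have hlim : Tendsto (fun u => Real.exp (-t * u ^ 2) * Real.sin (c * u)) atTop (nhds 0) := by
    refine squeeze_zero_norm (fun u => ?_) hg
    rw [norm_mul, Real.norm_eq_abs, Real.norm_eq_abs, Real.abs_exp]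
    exact mul_le_of_le_one_right (Real.exp_pos _).le (Real.abs_sin_le_one _)
  have key := integral_Ioi_of_hasDerivAt_of_tendsto
    (by fun_prop : Continuous fun u => Real.exp (-t * u ^ 2) * Real.sin (c * u)).continuousWithinAt
    hd ((hi2.const_mul c).sub (hi1.const_mul t)).integrableOn hlim
  rw [integral_sub (hi2.const_mul c).integrableOn (hi1.const_mul t).integrableOn,
    integral_const_mul, integral_const_mul] at key
  simp only [mul_zero, Real.sin_zero, sub_zero] at key
  rw [div_mul_eq_mul_div, eq_div_iff ht.ne']
  linarith

/-- Spectral representation of the density of the first hitting time of `0` by a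
Brownian motion started at `x ≥ 0`. -/
theorem stmt15 (t x : ℝ) (ht : 0 < t) (hx : 0 ≤ x) :
    (1 / π) * ∫ γ in Ioi (0 : ℝ), Real.exp (-γ * t) * Real.sin (x * Real.sqrt (2 * γ))
      = x * t ^ (-(3 : ℝ) / 2) * (2 * π) ^ (-(1 : ℝ) / 2) * Real.exp (-x ^ 2 / (2 * t)) := by
  have hsub : ∫ γ in Ioi (0 : ℝ), Real.exp (-γ * t) * Real.sin (x * Real.sqrt (2 * γ))
      = ∫ u in Ioi (0 : ℝ), 2 * u * (Real.exp (-t * u ^ 2) * Real.sin (x * √2 * u)) := by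
    rw [← integral_comp_rpow_Ioi_of_pos (p := 2) two_pos]
    refine setIntegral_congr_fun measurableSet_Ioi fun u hu => ?_
    have hu : 0 < u := hu
    have hs : √(2 * u ^ 2) = √2 * u := by
      rw [Real.sqrt_mul zero_le_two, Real.sqrt_sq hu.le]
    have h1 : (2 : ℝ) - 1 = 1 := by norm_num
    simp only [smul_eq_mul, Real.rpow_two, hs, h1, Real.rpow_one]
    ring_nf
  have h32 : t ^ (-(3 : ℝ) / 2) = (t * √t)⁻¹ := by
    rw [show (-(3 : ℝ) / 2) = -(1 + 1 / 2) by norm_num, Real.rpow_neg ht.le,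
      Real.rpow_add ht, Real.rpow_one, Real.sqrt_eq_rpow]
  have h12 : (2 * π) ^ (-(1 : ℝ) / 2) = (√2 * √π)⁻¹ := by
    rw [show (-(1 : ℝ) / 2) = -(1 / 2) by norm_num, Real.rpow_neg (by positivity),
      ← Real.sqrt_eq_rpow, Real.sqrt_mul zero_le_two]
  have hexp : -(x * √2) ^ 2 / (4 * t) = -x ^ 2 / (2 * t) := by
    rw [mul_pow, Real.sq_sqrt zero_le_two]
    field_simp
    norm_num
  rw [hsub, integral_Ioi_mul_exp_mul_sin t _ ht, integral_Ioi_exp_mul_cos t _ ht, hexp, h32, h12,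
    Real.sqrt_div pi_pos.le]
  have hpi : √π ^ 2 = π := Real.sq_sqrt pi_pos.le
  have h2 : √2 ^ 2 = (2 : ℝ) := Real.sq_sqrt zero_le_two
  have : √π ≠ 0 := by positivity
  have : √t ≠ 0 := by positivity
  field_simp
  rw [hpi, h2]
  ring
end
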